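/- Let λ ∈ 𝔥*. The group homomorphism Λ → ℤ^{Δ_[λ]} sending δ ∈ Λ to the tuple (⟨δ, β∨⟩)_{β ∈ Δ_[λ]} has image a finite-index subgroup of ℤ^{Δ_[λ]} (equivalently, the image is a full-rank sublattice of the weight lattice of the root system Φ_[λ]). -/

import Mathlib

/-!
The roots lie in the weight lattice, so it is enough that their tuples of pairings with `Δ` generate
a finite-index subgroup of `ℤ^Δ`.  As the rank of a subgroup of `ℤ^Δ` is at least the dimension of
its complex span, it suffices that these tuples span `ℂ^Δ`.  They do: the Weyl-invariant form
carries each root to a nonzero multiple of its coroot, so independent roots have independent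
coroots, and independent functionals have a surjective joint evaluation map.
-/

noncomputable section

variable {V : Type*} [AddCommGroup V] [Module ℂ V]

/-- `x` lies in the weight lattice `Λ = {x : ⟨x, α∨⟩ ∈ ℤ for all α ∈ Φ}`. -/
def InWeightLattice (Φ : Finset V) (coroot : V → (V →ₗ[ℂ] ℂ)) (x : V) : Prop :=
  ∀ α ∈ Φ, ∃ n : ℤ, coroot α x = (n : ℂ)

open Module Submodule

theorem index_ne_zero_of_span_intCast_eq_top {R κ : Type*} [Ring R] [StrongRankCondition R]
    [Finite κ] (S : AddSubgroup (κ → ℤ))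
    (hS : span R ((Int.castAddHom R).compLeft κ '' S) = ⊤) : S.index ≠ 0 := by
  have := Fintype.ofFinite κ
  let cast : (κ → ℤ) →ₗ[ℤ] (κ → R) := ((Int.castAddHom R).compLeft κ).toIntLinearMap
  let N := AddSubgroup.toIntSubmodule S
  let b := Free.chooseBasis ℤ N
  have hb : span ℤ (Set.range fun i => cast (b i)) = N.map cast :=
    calc span ℤ (Set.range fun i => cast (b i))
        = (span ℤ (Set.range b)).map (cast ∘ₗ N.subtype) := by
          rw [map_span, ← Set.range_comp]
          rfl
      _ = N.map cast := by rw [b.span_eq, map_comp, Submodule.map_top, range_subtype]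
  have hspan : span R (Set.range fun i => cast (b i)) = ⊤ := by
    rw [← span_span_of_tower ℤ, hb]
    exact hS
  have hrank : finrank ℤ N = finrank ℤ (κ → ℤ) := by
    refine le_antisymm (finrank_le N) ?_
    calc finrank ℤ (κ → ℤ) = finrank R (κ → R) := by rw [finrank_pi, finrank_pi]
      _ = finrank R (span R (Set.range fun i => cast (b i))) := by rw [hspan, finrank_top]
      _ ≤ Fintype.card (Free.ChooseBasisIndex ℤ N) := finrank_range_le_card _
      _ = finrank ℤ N := (finrank_eq_card_chooseBasisIndex ℤ N).symm
  have : Finite ((κ → ℤ) ⧸ N) := finiteQuotientOfFreeOfRankEq N hrank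
  exact AddSubgroup.index_ne_zero_iff_finite.mpr this

theorem pi_surjective_of_linearIndependent {K M κ : Type*} [Field K] [AddCommGroup M] [Module K M]
    [Finite κ] {f : κ → Dual K M} (hf : LinearIndependent K f) :
    Function.Surjective (LinearMap.pi f) := by
  have := Fintype.ofFinite κ
  classical
  rw [← LinearMap.dualMap_injective_iff, ← LinearMap.ker_eq_bot, LinearMap.ker_eq_bot']
  intro φ hφ
  have hsum : ∑ i, φ (Pi.single i 1) • f i = 0 := by
    ext x
    have hx : φ (LinearMap.pi f x) = 0 := LinearMap.congr_fun hφ x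
    rw [pi_eq_sum_univ' (LinearMap.pi f x), map_sum] at hx
    simpa [mul_comm] using hx
  refine (Pi.basisFun K κ).ext fun i => ?_
  simpa using Fintype.linearIndependent_iff.mp hf _ hsum i

theorem span_range_inclusion_subset_span {R M : Type*} [Ring R] [AddCommGroup M] [Module R M]
    {s : Set M} : span R (Set.range (Set.inclusion (subset_span (R := R) (s := s)))) = ⊤ := by
  rw [Set.range_inclusion]
  exact span_span_coe_preimage

/-- A finite set `Φ` of vectors with a choice of coroots forming a crystallographic root system,
possibly non-reduced, in the subspace spanned by `Φ`.  The values of `coroot` outside `Φ` are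
junk. -/
structure IsCrystallographicRootSystem {K M : Type*} [CommRing K] [AddCommGroup M] [Module K M]
    (Φ : Set M) (coroot : M → Dual K M) : Prop where
  finite : Φ.Finite
  coroot_self : ∀ α ∈ Φ, coroot α α = 2
  reflection_mem : ∀ α ∈ Φ, ∀ β ∈ Φ, β - coroot α β • α ∈ Φ
  exists_int : ∀ α ∈ Φ, ∀ β ∈ Φ, ∃ n : ℤ, coroot α β = n

section WeightLattice

variable {K M κ : Type*} [CommRing K] [AddCommGroup M] [Module K M]

/-- The weight lattice `Λ` of `(Φ, coroot)`: the vectors pairing integrally with all coroots. -/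
def weightLattice (Φ : Set M) (coroot : M → Dual K M) : AddSubgroup M :=
  ⨅ α ∈ Φ, (Int.castAddHom K).range.comap (coroot α).toAddMonoidHom

theorem mem_weightLattice {Φ : Set M} {coroot : M → Dual K M} {x : M} :
    x ∈ weightLattice Φ coroot ↔ ∀ α ∈ Φ, ∃ n : ℤ, coroot α x = n := by
  simp only [weightLattice, AddSubgroup.mem_iInf, AddSubgroup.mem_comap, AddMonoidHom.mem_range,
    eq_comm, Int.coe_castAddHom, LinearMap.toAddMonoidHom_coe]

/-- The image of `Λ → ℤ^κ`, `δ ↦ (⟨δ, (b i)∨⟩)ᵢ`.  The pairings are elements of `K`, so the image is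
formed in `K^κ` and pulled back along `ℤ^κ → K^κ`. -/
def pairingImage (Φ : Set M) (coroot : M → Dual K M) (b : κ → Φ) : AddSubgroup (κ → ℤ) :=
  ((weightLattice Φ coroot).map (LinearMap.pi fun i => coroot (b i)).toAddMonoidHom).comap
    ((Int.castAddHom K).compLeft κ)

theorem mem_pairingImage {Φ : Set M} {coroot : M → Dual K M} {b : κ → Φ} {v : κ → ℤ} :
    v ∈ pairingImage Φ coroot b ↔
      ∃ δ, (∀ α ∈ Φ, ∃ n : ℤ, coroot α δ = n) ∧ ∀ i, coroot (b i) δ = v i := by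
  simp [pairingImage, mem_weightLattice, funext_iff]

theorem IsCrystallographicRootSystem.pi_coroot_mem_image_pairingImage
    {Φ : Set M} {coroot : M → Dual K M} (h : IsCrystallographicRootSystem Φ coroot) (b : κ → Φ)
    {α : M} (hα : α ∈ Φ) :
    LinearMap.pi (fun i => coroot (b i)) α ∈
      (Int.castAddHom K).compLeft κ '' pairingImage Φ coroot b := by
  choose v hv using fun i => h.exists_int (b i) (b i).2 α hα
  exact ⟨v, mem_pairingImage.mpr ⟨α, fun β hβ => h.exists_int β hβ α hα, hv⟩,
    funext fun i => (hv i).symm⟩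

end WeightLattice

namespace IsCrystallographicRootSystem

variable {K M κ : Type*} [Field K] [CharZero K] [AddCommGroup M] [Module K M]
  {Φ : Set M} {coroot : M → Dual K M}

-- The reflections in two distinct roots with the same coroot would compose to a transvection of
-- infinite order preserving the finite set `Φ`.
theorem eq_of_domRestrict_coroot_eq (h : IsCrystallographicRootSystem Φ coroot) {α β : M}
    (hα : α ∈ Φ) (hβ : β ∈ Φ)
    (hαβ : (coroot α).domRestrict (span K Φ) = (coroot β).domRestrict (span K Φ)) : α = β := by
  have : IsAddTorsionFree M := .of_isTorsionFree K M
  have heq : ∀ γ ∈ Φ, coroot α γ = coroot β γ := fun γ hγ =>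
    LinearMap.congr_fun hαβ ⟨γ, subset_span hγ⟩
  exact eq_of_mapsTo_reflection_of_mem h.finite (h.coroot_self α hα) (h.coroot_self β hβ)
    (heq α hα ▸ h.coroot_self α hα) (heq β hβ ▸ h.coroot_self β hβ)
    (h.reflection_mem α hα) (h.reflection_mem β hβ) hβ

/-- The root system as a `RootPairing`, which gives access to the Weyl-invariant form.  It lives on
the span of the roots because only there do the roots determine the coroots. -/
def rootPairing (h : IsCrystallographicRootSystem Φ coroot) :
    RootPairing Φ K (span K Φ) (Dual K (span K Φ)) :=
  have : Finite Φ := h.finite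
  have : FiniteDimensional K (span K Φ) := .span_of_finite K h.finite
  .mk'' (Dual.eval K (span K Φ))
    (Function.Embedding.mk (Set.inclusion subset_span) (Set.inclusion_injective subset_span))
    ⟨fun α => (coroot α).domRestrict (span K Φ), fun α β hαβ =>
      Subtype.ext (h.eq_of_domRestrict_coroot_eq α.2 β.2 hαβ)⟩
    (fun α => h.coroot_self α α.2)
    (by
      rintro α - ⟨β, rfl⟩
      exact ⟨⟨_, h.reflection_mem α α.2 β β.2⟩, rfl⟩)
    span_range_inclusion_subset_span

theorem isCrystallographic_rootPairing (h : IsCrystallographicRootSystem Φ coroot) :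
    h.rootPairing.IsCrystallographic where
  exists_value α β :=
    have ⟨n, hn⟩ := h.exists_int β β.2 α α.2
    ⟨n, hn.symm⟩

theorem isRootSystem_rootPairing (h : IsCrystallographicRootSystem Φ coroot) :
    h.rootPairing.IsRootSystem :=
  have : Finite Φ := h.finite
  have : FiniteDimensional K (span K Φ) := .span_of_finite K h.finite
  RootPairing.isRootSystem_mk'' (hsp := span_range_inclusion_subset_span)
    h.isCrystallographic_rootPairing.exists_value

theorem linearIndependent_domRestrict_coroot (h : IsCrystallographicRootSystem Φ coroot) {b : κ → Φ}
    (hb : LinearIndependent K fun i => (b i : M)) :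
    LinearIndependent K fun i => (coroot (b i)).domRestrict (span K Φ) := by
  have := h.finite.fintype
  have := h.isCrystallographic_rootPairing
  have := h.isRootSystem_rootPairing
  have hbinj : Function.Injective b := hb.injective.of_comp
  have hroot : LinearIndependent K (h.rootPairing.root ∘ b) := .of_comp (span K Φ).subtype hb
  rw [← linearIndepOn_range_iff hbinj, ← RootPairing.linearIndepOn_coroot_iff,
    linearIndepOn_range_iff hbinj] at hroot
  exact hroot

theorem span_image_pi_coroot_eq_top [Finite κ] (h : IsCrystallographicRootSystem Φ coroot)
    {b : κ → Φ} (hb : LinearIndependent K fun i => (b i : M)) :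
    span K (LinearMap.pi (fun i => coroot (b i)) '' Φ) = ⊤ := by
  have hsurj := pi_surjective_of_linearIndependent (h.linearIndependent_domRestrict_coroot hb)
  rw [← map_span, eq_top_iff]
  rintro v -
  obtain ⟨x, rfl⟩ := hsurj v
  exact ⟨x, x.2, rfl⟩

end IsCrystallographicRootSystem

theorem weightLattice_pairing_image_finite_index_general {K M κ : Type*} [Field K] [CharZero K]
    [AddCommGroup M] [Module K M] {Φ : Set M} {coroot : M → Dual K M}
    (h : IsCrystallographicRootSystem Φ coroot) {b : κ → Φ}
    (hb : LinearIndependent K fun i => (b i : M)) : (pairingImage Φ coroot b).index ≠ 0 := by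
  have := h.finite.to_subtype
  have : Finite κ := .of_injective b hb.injective.of_comp
  refine index_ne_zero_of_span_intCast_eq_top (R := K) _ (top_unique ?_)
  rw [← h.span_image_pi_coroot_eq_top hb]
  exact span_mono (Set.image_subset_iff.mpr fun α hα => h.pi_coroot_mem_image_pairingImage b hα)

/-- Let `λ ∈ 𝔥*`.  The group homomorphism `Λ → ℤ^{Δ_[λ]}` sending
`δ ∈ Λ` to the tuple `(⟨δ, β∨⟩)_{β ∈ Δ_[λ]}` has image a finite-index subgroup of
`ℤ^{Δ_[λ]}` (equivalently, the image is a full-rank sublattice of the weight lattice of the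
root system `Φ_[λ]`).

Setting: `Φ` is a finite reduced crystallographic root system in `V` with positive system
`Φpos`, coroot pairing `coroot`, reflections `s`, and Weyl group `W`; `Λ` is the weight
lattice (membership recorded by `InWeightLattice Φ coroot`).  `Δ` is the unique system of
simple roots of `Φ_[λ]` contained in `Φ⁺`, recorded by the hypotheses below.  The image is
formalized as an additive subgroup `S` of `ℤ^{Δ}` whose members are exactly the tuples of
pairings of elements of `Λ`, and finite index is `S.index ≠ 0`. -/
theorem weightLattice_pairing_image_finite_index
    (Φ Φpos Δ : Finset V) (coroot : V → (V →ₗ[ℂ] ℂ)) (s : V → (V ≃ₗ[ℂ] V))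
    (W : Subgroup (V ≃ₗ[ℂ] V))
    (hΦ0 : (0 : V) ∉ Φ)
    (hspan : Submodule.span ℂ (Φ : Set V) = ⊤)
    (h2 : ∀ α ∈ Φ, coroot α α = 2)
    (hred : ∀ α ∈ Φ, ∀ c : ℂ, c • α ∈ (Φ : Set V) → c = 1 ∨ c = -1)
    (hcrys : ∀ α ∈ Φ, ∀ β ∈ Φ, ∃ n : ℤ, coroot α β = (n : ℂ))
    (hs : ∀ α ∈ Φ, ∀ x : V, s α x = x - coroot α x • α)
    (hsΦ : ∀ α ∈ Φ, ∀ β ∈ Φ, s α β ∈ Φ)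
    (hW : W = Subgroup.closure (s '' (Φ : Set V)))
    (hpos : Φpos ⊆ Φ)
    (hsplit : ∀ α ∈ Φ, (α ∈ Φpos ↔ ¬(-α ∈ Φpos)))
    (lam : V)
    -- `Δ` is the system of simple roots of `Φ_[λ]` contained in `Φ⁺`:
    (hΔsub : ∀ α ∈ Δ, α ∈ Φ ∧ α ∈ Φpos ∧ ∃ n : ℤ, coroot α lam = (n : ℂ))
    (hΔind : LinearIndependent ℂ (fun a : {x // x ∈ Δ} => (a : V)))
    (hΔgen : ∀ β ∈ Φ, β ∈ Φpos → (∃ n : ℤ, coroot β lam = (n : ℂ)) →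
      ∃ c : V → ℕ, β = ∑ α ∈ Δ, (c α : ℤ) • α) :
    ∃ S : AddSubgroup ({x // x ∈ Δ} → ℤ),
      (∀ v : {x // x ∈ Δ} → ℤ,
        v ∈ S ↔ ∃ δ : V, InWeightLattice Φ coroot δ ∧
          ∀ β : {x // x ∈ Δ}, coroot (β : V) δ = ((v β : ℤ) : ℂ)) ∧
      S.index ≠ 0 := by
  have hΦ : IsCrystallographicRootSystem (Φ : Set V) coroot :=
    ⟨Φ.finite_toSet, h2, fun α hα β hβ => hs α hα β ▸ hsΦ α hα β hβ, hcrys⟩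
  let b (β : {x // x ∈ Δ}) : (Φ : Set V) := ⟨β, (hΔsub β β.2).1⟩
  exact ⟨pairingImage (Φ : Set V) coroot b, fun _ => mem_pairingImage,
    weightLattice_pairing_image_finite_index_general hΦ (b := b) hΔind⟩

end
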